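/- arXiv:2009.08447 — 14 statements merged into one kernel-verified Lean document; each statement's English description precedes it below -/
import Mathlib

section
/- Let m ≥ 1 and let y, y' ∈ Δᵐ with y_i > 0 for all i. Then Σ_{i=1}^m y'_i · log(y'_i / y_i) ≥ (1/2) · Σ_{i=1}^m (y_i − y'_i)² / ( (2/3)·y_i + (1/3)·y'_i ), with the convention 0·log 0 = 0. -/
theorem aux_hasDeriv (t : ℝ) (ht : 0 < t) :
    HasDerivAt (fun t : ℝ => Real.log t - (5*t^2-4*t-1)/(2*t^2+4*t))
      ((t-1)^3/(t^2*(t+2)^2)) t := by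
  have h0 : t ≠ 0 := ht.ne'
  have hd : 2*t^2+4*t ≠ 0 := by positivity
  have h2 : HasDerivAt (fun t : ℝ => t^2) (2*t) t := by
    simpa using hasDerivAt_pow 2 t
  have h1 := hasDerivAt_id' t
  have hn : HasDerivAt (fun t : ℝ => 5*t^2-4*t-1) (5*(2*t)-4*1) t :=
    ((h2.const_mul 5).sub (h1.const_mul 4)).sub_const 1
  have hq : HasDerivAt (fun t : ℝ => 2*t^2+4*t) (2*(2*t)+4*1) t :=
    (h2.const_mul 2).add (h1.const_mul 4)
  have h := (Real.hasDerivAt_log h0).sub (hn.div hq hd)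
  refine h.congr_deriv ?_
  have h3 : t + 2 ≠ 0 := by positivity
  have e : 2*t^2+4*t = 2*t*(t+2) := by ring
  rw [e]
  field_simp
  ring

theorem aux_log (t : ℝ) (ht : 0 < t) : (5*t^2-4*t-1)/(2*t^2+4*t) ≤ Real.log t := by
  set g : ℝ → ℝ := fun t : ℝ => Real.log t - (5*t^2-4*t-1)/(2*t^2+4*t) with hg
  have g1 : g 1 = 0 := by simp [hg]; norm_num
  suffices h : g 1 ≤ g t by
    rw [g1] at h
    exact sub_nonneg.mp h
  rcases le_total t 1 with h | h
  · have : AntitoneOn g (Set.Icc t 1) := by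
      apply antitoneOn_of_deriv_nonpos (convex_Icc _ _)
      · intro x hx
        exact (aux_hasDeriv x (ht.trans_le hx.1)).continuousAt.continuousWithinAt
      · intro x hx
        rw [interior_Icc] at hx
        exact (aux_hasDeriv x (ht.trans hx.1)).differentiableAt.differentiableWithinAt
      · intro x hx
        rw [interior_Icc] at hx
        rw [(aux_hasDeriv x (ht.trans hx.1)).deriv]
        apply div_nonpos_of_nonpos_of_nonneg _ (by positivity)
        exact Odd.pow_nonpos (by decide) (by linarith [hx.2])
    exact this ⟨le_rfl, h⟩ ⟨h, le_rfl⟩ h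
  · have : MonotoneOn g (Set.Icc 1 t) := by
      apply monotoneOn_of_deriv_nonneg (convex_Icc _ _)
      · intro x hx
        exact (aux_hasDeriv x (one_pos.trans_le hx.1)).continuousAt.continuousWithinAt
      · intro x hx
        rw [interior_Icc] at hx
        exact (aux_hasDeriv x (one_pos.trans hx.1)).differentiableAt.differentiableWithinAt
      · intro x hx
        rw [interior_Icc] at hx
        rw [(aux_hasDeriv x (one_pos.trans hx.1)).deriv]
        have : 0 ≤ x - 1 := by linarith [hx.1]
        positivity
    exact this ⟨le_rfl, h⟩ ⟨h, le_rfl⟩ h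

theorem aux_point (a b : ℝ) (ha : 0 < a) (hb : 0 ≤ b) :
    (1/2) * ((a - b)^2 / ((2/3)*a + (1/3)*b)) + (b - a) ≤ b * Real.log (b / a) := by
  rcases hb.eq_or_lt with rfl | hb
  · have : (1/2) * ((a - 0)^2 / ((2/3)*a + (1/3)*0)) + (0 - a) = -(a/4) := by
      field_simp
      ring
    rw [this]
    simp
    positivity
  · have h := mul_le_mul_of_nonneg_left (aux_log (b/a) (by positivity)) hb.le
    refine le_trans (le_of_eq ?_) h
    have h3 : 2*a + b ≠ 0 := by positivity
    have h4 : b + 2*a ≠ 0 := by positivity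
    have e : (2/3)*a + (1/3)*b = (2*a+b)/3 := by ring
    have e2 : 2*(b/a)^2+4*(b/a) = 2*b*(2*a+b)/a^2 := by
      field_simp
      ring
    rw [e, e2]
    field_simp
    ring

/-- For `y, y' ∈ Δᵐ` with `y` entrywise positive, the KL divergence
`∑ i, y'_i log(y'_i / y_i)` is at least `(1/2) ∑ i (y_i − y'_i)² / ((2/3) y_i + (1/3) y'_i)`. -/
theorem kl_ge_half_weighted_sq (m : ℕ) (hm : 1 ≤ m) (y y' : Fin m → ℝ)
    (hy : y ∈ stdSimplex ℝ (Fin m)) (hy' : y' ∈ stdSimplex ℝ (Fin m))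
    (hypos : ∀ i, 0 < y i) :
    (1 / 2) * ∑ i, (y i - y' i) ^ 2 / ((2 / 3) * y i + (1 / 3) * y' i)
      ≤ ∑ i, y' i * Real.log (y' i / y i) := by
  have h := Finset.sum_le_sum (s := Finset.univ)
    (fun i _ => aux_point (y i) (y' i) (hypos i) (hy'.1 i))
  rw [Finset.sum_add_distrib, Finset.sum_sub_distrib, hy.2, hy'.2, ← Finset.mul_sum] at h
  linarith
end

section
/- Let β ≥ 0, let x ∈ Δⁿ, and let x' ∈ Δⁿ be a β-padding of x. Then Σ_{j=1}^n x'_j log x'_j − Σ_{j=1}^n x_j log x_j ≤ β·n/e + β·(1 + β), with the convention 0·log 0 = 0. -/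
/-- `x'` is a `β`-padding of `x`: there is `x̃` with `x̃ ≥ x` entrywise,
`‖x̃ − x‖₁ ≤ β`, and `x' = x̃ / ‖x̃‖₁`. -/
def IsPadding {n : ℕ} (β : ℝ) (x x' : Fin n → ℝ) : Prop :=
  ∃ xt : Fin n → ℝ, (∀ j, x j ≤ xt j) ∧ (∑ j, |xt j - x j|) ≤ β ∧
    ∀ j, x' j = xt j / ∑ k, |xt k|

lemma neg_mul_log_le_aux (t : ℝ) (ht : 0 ≤ t) : -(t * Real.log t) ≤ 1 / Real.exp 1 := by
  rcases ht.eq_or_lt with h | h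
  · subst h; simp; positivity
  · have he := Real.exp_pos 1
    have h1 := Real.log_le_sub_one_of_pos (x := 1 / (Real.exp 1 * t)) (by positivity)
    rw [one_div, Real.log_inv, Real.log_mul he.ne' h.ne', Real.log_exp] at h1
    have h2 : -Real.log t ≤ (Real.exp 1 * t)⁻¹ := by linarith
    calc -(t * Real.log t) = t * (-Real.log t) := by ring
      _ ≤ t * (Real.exp 1 * t)⁻¹ := by gcongr
      _ = 1 / Real.exp 1 := by field_simp

lemma mul_log_diff_aux (a b β : ℝ) (ha : 0 ≤ a) (hab : a ≤ b) (hβ : 0 ≤ β) (hb : b ≤ 1 + β) :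
    b * Real.log b - a * Real.log a ≤ (b - a) * (1 + β) := by
  rcases (ha.trans hab).eq_or_lt with h | h
  · have : a = 0 := by linarith
    subst this; subst h; simp
  have hl : Real.log b ≤ β := by linarith [Real.log_le_sub_one_of_pos h]
  have h0 : (b - a) * Real.log b ≤ (b - a) * β := by
    apply mul_le_mul_of_nonneg_left hl; linarith
  rcases ha.eq_or_lt with h' | h'
  · subst h'; simp at *; nlinarith
  have h1 := Real.log_le_sub_one_of_pos (x := b / a) (by positivity)
  rw [Real.log_div h.ne' h'.ne'] at h1
  have h2 : a * (Real.log b - Real.log a) ≤ a * (b / a - 1) := by gcongr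
  have h3 : a * (b / a - 1) = b - a := by field_simp
  nlinarith

/-- If `x' ∈ Δⁿ` is a `β`-padding of `x ∈ Δⁿ`, then the entropy increase
`∑ x'_j log x'_j − ∑ x_j log x_j` is at most `βn/e + β(1+β)`. -/
theorem entropy_increase_of_padding (n : ℕ) (β : ℝ) (hβ : 0 ≤ β)
    (x x' : Fin n → ℝ)
    (hx : x ∈ stdSimplex ℝ (Fin n)) (hx' : x' ∈ stdSimplex ℝ (Fin n))
    (hpad : IsPadding β x x') :
    (∑ j, x' j * Real.log (x' j)) - ∑ j, x j * Real.log (x j)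
      ≤ β * n / Real.exp 1 + β * (1 + β) := by
  obtain ⟨y, hy, hd, hx'e⟩ := hpad
  obtain ⟨hx0, hx1⟩ := hx
  have hy0 : ∀ j, 0 ≤ y j := fun j => (hx0 j).trans (hy j)
  have habs : ∑ k, |y k| = ∑ k, y k := Finset.sum_congr rfl fun k _ => abs_of_nonneg (hy0 k)
  have hd' : ∑ j, |y j - x j| = ∑ j, y j - 1 := by
    rw [← hx1, ← Finset.sum_sub_distrib]
    exact Finset.sum_congr rfl fun k _ => abs_of_nonneg (sub_nonneg.2 (hy k))
  have hS1 : 1 ≤ ∑ j, y j := by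
    rw [← hx1]; exact Finset.sum_le_sum fun k _ => hy k
  rw [hd'] at hd
  rw [habs] at hx'e
  have hyS : ∀ j, y j ≤ ∑ k, y k := fun j =>
    Finset.single_le_sum (fun k _ => hy0 k) (Finset.mem_univ j)
  have hA : ∑ j, y j * Real.log (y j) - ∑ j, x j * Real.log (x j) ≤ (∑ j, y j - 1) * (1 + β) := by
    have hq : ∑ j, y j - 1 = ∑ j, (y j - x j) := by rw [Finset.sum_sub_distrib, hx1]
    rw [hq, ← Finset.sum_sub_distrib, Finset.sum_mul]
    refine Finset.sum_le_sum fun j _ => mul_log_diff_aux _ _ _ (hx0 j) (hy j) hβ ?_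
    linarith [hyS j]
  have hB : -(∑ j, y j * Real.log (y j)) ≤ n / Real.exp 1 := by
    rw [← Finset.sum_neg_distrib]
    refine (Finset.sum_le_sum fun j _ => neg_mul_log_le_aux _ (hy0 j)).trans ?_
    simp [div_eq_mul_inv]
  set S := ∑ j, y j with hS
  have hSpos : 0 < S := by linarith
  have hC : ∀ j, x' j * Real.log (x' j) ≤ (y j * Real.log (y j)) / S := by
    intro j
    rw [hx'e j]
    rcases (hy0 j).eq_or_lt with h | h
    · rw [← h]; simp
    rw [Real.log_div h.ne' hSpos.ne', div_mul_eq_mul_div]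
    have := Real.log_nonneg hS1
    gcongr
    linarith
  have hD := Finset.sum_le_sum (s := Finset.univ) fun j _ => hC j
  rw [← Finset.sum_div] at hD
  set Y := ∑ j, y j * Real.log (y j)
  have hE : Y / S - Y = (1 - 1 / S) * (-Y) := by ring
  have h1S : 1 - 1 / S ≤ β := by
    have : 1 - 1 / S = (S - 1) / S := by field_simp
    rw [this]
    exact (div_le_self (by linarith) hS1).trans hd
  have h1S0 : 0 ≤ 1 - 1 / S := by
    have : 1 / S ≤ 1 := by rw [div_le_one hSpos]; exact hS1
    linarith
  have hF : (1 - 1 / S) * (-Y) ≤ β * (n / Real.exp 1) :=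
    (mul_le_mul_of_nonneg_left hB h1S0).trans
      (mul_le_mul_of_nonneg_right h1S (by positivity))
  have hG : (S - 1) * (1 + β) ≤ β * (1 + β) := by gcongr
  rw [mul_div_assoc]
  linarith
end

section
/- Let β ≥ 0, let x ∈ Δⁿ have strictly positive entries, and let x' ∈ Δⁿ be a β-padding of x (so x' also has strictly positive entries). Then for every u ∈ Δⁿ, Σ_{j=1}^n u_j · log(x_j / x'_j) ≤ β; equivalently, V_{x'}(u) − V_x(u) ≤ β, where V_z(u) = Σ_j u_j log(u_j/z_j). -/
/-- If `x ∈ Δⁿ` is entrywise positive and `x' ∈ Δⁿ` is a `β`-padding of `x`,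
then for every `u ∈ Δⁿ`, `∑ j, u_j log(x_j / x'_j) ≤ β`, i.e. `V_{x'}(u) − V_x(u) ≤ β`. -/
theorem padding_divergence_increase (n : ℕ) (β : ℝ) (hβ : 0 ≤ β)
    (x x' : Fin n → ℝ)
    (hx : x ∈ stdSimplex ℝ (Fin n)) (hx' : x' ∈ stdSimplex ℝ (Fin n))
    (hxpos : ∀ j, 0 < x j)
    (hpad : IsPadding β x x') :
    ∀ u ∈ stdSimplex ℝ (Fin n), ∑ j, u j * Real.log (x j / x' j) ≤ β := by
  intro u hu
  obtain ⟨xt, hle, hsum, hdef⟩ := hpad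
  have hpos : ∀ j, 0 < xt j := fun j => lt_of_lt_of_le (hxpos j) (hle j)
  have habs : ∑ k, |xt k| = ∑ k, xt k :=
    Finset.sum_congr rfl fun k _ => abs_of_pos (hpos k)
  have hdiff : ∑ j, |xt j - x j| = ∑ j, xt j - 1 := by
    rw [← hx.2, ← Finset.sum_sub_distrib]
    exact Finset.sum_congr rfl fun k _ => abs_of_nonneg (sub_nonneg.2 (hle k))
  have hmono : ∑ j, x j ≤ ∑ j, xt j := Finset.sum_le_sum fun j _ => hle j
  rw [hx.2] at hmono
  have hS : 0 < ∑ j, xt j := by linarith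
  have key : ∀ j, Real.log (x j / x' j) ≤ β := by
    intro j
    have h1 : x j / x' j ≤ ∑ k, xt k := by
      rw [hdef j, habs, div_div_eq_mul_div, div_le_iff₀ (hpos j), mul_comm]
      exact mul_le_mul_of_nonneg_left (hle j) hS.le
    have h2 : 0 < x j / x' j := by
      rw [hdef j, habs]
      exact div_pos (hxpos j) (div_pos (hpos j) hS)
    have h3 := Real.log_le_sub_one_of_pos h2
    linarith
  calc ∑ j, u j * Real.log (x j / x' j) ≤ ∑ j, u j * β :=
        Finset.sum_le_sum fun j _ => mul_le_mul_of_nonneg_left (key j) (hu.1 j)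
    _ = β := by rw [← Finset.sum_mul, hu.2, one_mul]
end

section
/- Let δ > 0 and let x' ∈ Δⁿ have strictly positive entries. Define x ∈ Δⁿ (the truncation of x' at level δ) by x_j = max(x'_j, δ) / Σ_{k=1}^n max(x'_k, δ). Then for every u ∈ Δⁿ, Σ_{j=1}^n u_j · log(x'_j / x_j) ≤ δ·n; equivalently, V_x(u) − V_{x'}(u) ≤ δ·n, where V_z(u) = Σ_j u_j log(u_j/z_j). -/
/-- Let `x ∈ Δⁿ` be the truncation at level `δ > 0` of an entrywise positive
`x' ∈ Δⁿ`, i.e. `x_j = max(x'_j, δ) / ∑ₖ max(x'_k, δ)`.  Then for every `u ∈ Δⁿ`,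
`∑ j, u_j log(x'_j / x_j) ≤ δ n`, i.e. `V_x(u) − V_{x'}(u) ≤ δ n`. -/
theorem truncate_divergence_increase (n : ℕ) (δ : ℝ) (hδ : 0 < δ)
    (x' x : Fin n → ℝ)
    (hx' : x' ∈ stdSimplex ℝ (Fin n)) (hx'pos : ∀ j, 0 < x' j)
    (hx : ∀ j, x j = max (x' j) δ / ∑ k, max (x' k) δ) :
    ∀ u ∈ stdSimplex ℝ (Fin n), ∑ j, u j * Real.log (x' j / x j) ≤ δ * n := by
  intro u hu
  obtain ⟨hu0, hu1⟩ := hu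
  have hS : ∑ k, max (x' k) δ ≤ 1 + δ * n := by
    calc ∑ k, max (x' k) δ ≤ ∑ k, (x' k + δ) :=
          Finset.sum_le_sum fun k _ => max_le (by linarith) (by linarith [hx'pos k])
      _ = 1 + δ * n := by
          rw [Finset.sum_add_distrib, hx'.2]
          simp [mul_comm]
  have key : ∀ j, Real.log (x' j / x j) ≤ δ * n := by
    intro j
    have hm : 0 < max (x' j) δ := lt_max_of_lt_right hδ
    have hSpos : 0 < ∑ k, max (x' k) δ :=
      Finset.sum_pos (fun k _ => lt_max_of_lt_right hδ) ⟨j, Finset.mem_univ j⟩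
    have hxj : 0 < x j := by rw [hx j]; exact div_pos hm hSpos
    have h1 : x' j / x j ≤ ∑ k, max (x' k) δ := by
      rw [div_le_iff₀ hxj, hx j, mul_div_cancel₀ _ hSpos.ne']
      exact le_max_left _ _
    have h2 := Real.log_le_sub_one_of_pos (div_pos (hx'pos j) hxj)
    linarith
  calc ∑ j, u j * Real.log (x' j / x j) ≤ ∑ j, u j * (δ * n) :=
        Finset.sum_le_sum fun j _ => mul_le_mul_of_nonneg_left (key j) (hu0 j)
    _ = δ * n := by rw [← Finset.sum_mul, hu1, one_mul]
end

section
/- Let δ⁻, δ⁺ ∈ ℝⁿ and 0 < ρ ≤ 1 satisfy (δ⁺)_i = max( (δ⁻)_i , max_{j} (δ⁻)_j + log ρ ) for every i ∈ {1,…,n}. Then exp(δ⁺)/‖exp(δ⁺)‖₁ is a ρ·n-padding of exp(δ⁻)/‖exp(δ⁻)‖₁, where exp is applied entrywise. -/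
/-- If `δ⁺_i = max(δ⁻_i, maxⱼ δ⁻_j + log ρ)` for all `i` and `0 < ρ ≤ 1`,
then `exp(δ⁺)/‖exp(δ⁺)‖₁` is a `ρ·n`-padding of `exp(δ⁻)/‖exp(δ⁻)‖₁`. -/
theorem raise_small_entries_padding (n : ℕ) (hn : 0 < n)
    (δm δp : Fin n → ℝ) (ρ : ℝ) (hρ0 : 0 < ρ) (hρ1 : ρ ≤ 1)
    (hδp : ∀ i, δp i =
      max (δm i) (Finset.univ.sup' ⟨⟨0, hn⟩, Finset.mem_univ _⟩ δm + Real.log ρ)) :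
    IsPadding (ρ * n)
      (fun i => Real.exp (δm i) / ∑ k, Real.exp (δm k))
      (fun i => Real.exp (δp i) / ∑ k, Real.exp (δp k)) := by
  have hne : (Finset.univ : Finset (Fin n)).Nonempty := ⟨⟨0, hn⟩, Finset.mem_univ _⟩
  obtain ⟨m, -, hm⟩ := Finset.exists_mem_eq_sup' hne δm
  rw [hm] at hδp
  have hS : 0 < ∑ k, Real.exp (δm k) := Finset.sum_pos (fun i _ => Real.exp_pos _) hne
  have hmS : Real.exp (δm m) ≤ ∑ k, Real.exp (δm k) :=
    Finset.single_le_sum (f := fun k => Real.exp (δm k))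
      (fun i _ => (Real.exp_pos _).le) (Finset.mem_univ m)
  have hle : ∀ j, Real.exp (δm j) ≤ Real.exp (δp j) := fun j => by
    rw [Real.exp_le_exp, hδp]
    exact le_max_left _ _
  have hub : ∀ j, Real.exp (δp j) ≤ Real.exp (δm j) + ρ * Real.exp (δm m) := fun j => by
    rw [hδp]
    rcases max_choice (δm j) (δm m + Real.log ρ) with h | h
    · rw [h]
      have := mul_pos hρ0 (Real.exp_pos (δm m))
      linarith
    · rw [h, Real.exp_add, Real.exp_log hρ0]
      have := Real.exp_pos (δm j)
      linarith
  generalize (∑ k, Real.exp (δm k)) = S at hS hmS ⊢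
  refine ⟨fun j => Real.exp (δp j) / S, fun j => ?_, ?_, fun j => ?_⟩
  · exact div_le_div_of_nonneg_right (hle j) hS.le
  · have hb : ∀ j ∈ (Finset.univ : Finset (Fin n)),
        |Real.exp (δp j) / S - Real.exp (δm j) / S| ≤ ρ := fun j _ => by
      rw [← sub_div, abs_of_nonneg (div_nonneg (sub_nonneg.2 (hle j)) hS.le), div_le_iff₀ hS]
      have := hub j
      have := mul_le_mul_of_nonneg_left hmS hρ0.le
      linarith
    refine (Finset.sum_le_card_nsmul _ _ _ hb).trans (le_of_eq ?_)
    simp [mul_comm]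
  · have h1 : ∀ k, |Real.exp (δp k) / S| = Real.exp (δp k) / S := fun k =>
      abs_of_nonneg (div_nonneg (Real.exp_pos _).le hS.le)
    simp only [h1]
    rw [← Finset.sum_div, div_div_div_cancel_right₀ hS.ne']
end

section
/- Let 0 < ε ≤ 1/10, let S₁, …, S_K be pairwise disjoint subsets of {1,…,n} whose union is {1,…,n}, and for each k ∈ {1,…,K} let x_k, x̂_k ∈ ℝⁿ be nonnegative vectors supported on S_k with Σ_j (x_k)_j = Σ_j (x̂_k)_j = 1, such that x̂_k is an ε-padding of x_k. Suppose positive scalars ν_k, ν̂_k (k = 1,…,K) satisfy (1 − ε)·ν_k ≤ ν̂_k ≤ (1 + ε)·ν_k for all k, and set N = Σ_k ν_k and N̂ = Σ_k ν̂_k. Then x̂ := Σ_{k=1}^K (ν̂_k/N̂)·x̂_k is a 10ε-padding of x := Σ_{k=1}^K (ν_k/N)·x_k. -/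
/-- Combining per-block `ε`-paddings `x̂_k` of `x_k` (supported on the parts
`S_k` of a partition of `[n]`) with multiplicatively `(1 ± ε)`-accurate weights `ν̂_k ≈ ν_k`
produces a `10ε`-padding `x̂ = ∑ₖ (ν̂ₖ/N̂) x̂ₖ` of `x = ∑ₖ (νₖ/N) xₖ`. -/
theorem combine_paddings (n K : ℕ) (ε : ℝ) (hε0 : 0 < ε) (hε : ε ≤ 1 / 10)
    (S : Fin K → Finset (Fin n))
    (hdisj : ∀ k l, k ≠ l → Disjoint (S k) (S l))
    (hcover : Finset.univ.biUnion S = (Finset.univ : Finset (Fin n)))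
    (x xhat : Fin K → Fin n → ℝ)
    (hxnn : ∀ k j, 0 ≤ x k j) (hxhatnn : ∀ k j, 0 ≤ xhat k j)
    (hxsupp : ∀ k, ∀ j ∉ S k, x k j = 0)
    (hxhatsupp : ∀ k, ∀ j ∉ S k, xhat k j = 0)
    (hxsum : ∀ k, ∑ j, x k j = 1) (hxhatsum : ∀ k, ∑ j, xhat k j = 1)
    (hpad : ∀ k, IsPadding ε (x k) (xhat k))
    (ν νhat : Fin K → ℝ) (hν : ∀ k, 0 < ν k) (hνhat : ∀ k, 0 < νhat k)
    (hlow : ∀ k, (1 - ε) * ν k ≤ νhat k) (hhigh : ∀ k, νhat k ≤ (1 + ε) * ν k) :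
    IsPadding (10 * ε)
      (fun j => ∑ k, (ν k / ∑ l, ν l) * x k j)
      (fun j => ∑ k, (νhat k / ∑ l, νhat l) * xhat k j) := by
  rcases Nat.eq_zero_or_pos K with hK | hK
  · subst hK
    exact ⟨fun _ => 0, by simp, by simp; linarith, by simp⟩
  haveI : Nonempty (Fin K) := ⟨⟨0, hK⟩⟩
  have hN : 0 < ∑ l, ν l := Finset.sum_pos (fun k _ => hν k) Finset.univ_nonempty
  have hNh : 0 < ∑ l, νhat l := Finset.sum_pos (fun k _ => hνhat k) Finset.univ_nonempty
  have hNN : ∑ l, νhat l ≤ (1 + ε) * ∑ l, ν l := by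
    rw [Finset.mul_sum]; exact Finset.sum_le_sum (fun k _ => hhigh k)
  have hblock : ∀ k j, x k j ≤ (1 + ε) * xhat k j := by
    intro k j
    obtain ⟨xt, h1, h2, h3⟩ := hpad k
    have hnn : ∀ j, 0 ≤ xt j := fun j => (hxnn k j).trans (h1 j)
    have e1 : ∑ i, |xt i| = ∑ i, xt i :=
      Finset.sum_congr rfl (fun i _ => abs_of_nonneg (hnn i))
    have e2 : ∑ i, |xt i - x k i| = ∑ i, xt i - 1 := by
      rw [← hxsum k, ← Finset.sum_sub_distrib]
      exact Finset.sum_congr rfl (fun i _ => abs_of_nonneg (sub_nonneg.2 (h1 i)))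
    have e3 : 1 ≤ ∑ i, xt i := by
      rw [← hxsum k]; exact Finset.sum_le_sum (fun i _ => h1 i)
    have e4 : xt j = (∑ i, xt i) * xhat k j := by
      rw [h3 j, e1]; field_simp
    calc x k j ≤ xt j := h1 j
      _ = (∑ i, xt i) * xhat k j := e4
      _ ≤ _ := mul_le_mul_of_nonneg_right (by linarith) (hxhatnn k j)
  have hw : ∀ k, (ν k / ∑ l, ν l) * (1 + ε) ≤ (1 + 10 * ε) * (νhat k / ∑ l, νhat l) := by
    intro k
    rw [div_mul_eq_mul_div, ← mul_div_assoc, div_le_div_iff₀ hN hNh]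
    have hνk := hν k
    calc ν k * (1 + ε) * ∑ l, νhat l
        ≤ ν k * (1 + ε) * ((1 + ε) * ∑ l, ν l) :=
          mul_le_mul_of_nonneg_left hNN (by positivity)
      _ = ((1 + ε) ^ 2) * (ν k * ∑ l, ν l) := by ring
      _ ≤ ((1 + 10 * ε) * (1 - ε)) * (ν k * ∑ l, ν l) :=
          mul_le_mul_of_nonneg_right (by nlinarith) (by positivity)
      _ = (1 + 10 * ε) * ((1 - ε) * ν k) * ∑ l, ν l := by ring
      _ ≤ (1 + 10 * ε) * νhat k * ∑ l, ν l := by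
          have := hlow k
          gcongr
  have hsum : ∀ (w : Fin K → ℝ) (y : Fin K → Fin n → ℝ), 0 < ∑ l, w l →
      (∀ k, ∑ j, y k j = 1) → ∑ j, ∑ k, (w k / ∑ l, w l) * y k j = 1 := by
    intro w y hw hy
    rw [Finset.sum_comm]
    simp_rw [← Finset.mul_sum, hy, mul_one]
    rw [← Finset.sum_div, div_self hw.ne']
  have hle : ∀ j, ∑ k, (ν k / ∑ l, ν l) * x k j ≤
      (1 + 10 * ε) * ∑ k, (νhat k / ∑ l, νhat l) * xhat k j := by
    intro j
    rw [Finset.mul_sum]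
    refine Finset.sum_le_sum (fun k _ => ?_)
    calc (ν k / ∑ l, ν l) * x k j ≤ (ν k / ∑ l, ν l) * ((1 + ε) * xhat k j) :=
          mul_le_mul_of_nonneg_left (hblock k j) (div_nonneg (hν k).le hN.le)
      _ = (ν k / ∑ l, ν l) * (1 + ε) * xhat k j := by ring
      _ ≤ (1 + 10 * ε) * (νhat k / ∑ l, νhat l) * xhat k j :=
          mul_le_mul_of_nonneg_right (hw k) (hxhatnn k j)
      _ = _ := by ring
  have hs := hsum ν x hN hxsum
  have hsh := hsum νhat xhat hNh hxhatsum
  have hnn : ∀ j, 0 ≤ ∑ k, (νhat k / ∑ l, νhat l) * xhat k j := fun j =>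
    Finset.sum_nonneg (fun k _ => mul_nonneg (div_nonneg (hνhat k).le hNh.le) (hxhatnn k j))
  refine ⟨fun j => (1 + 10 * ε) * ∑ k, (νhat k / ∑ l, νhat l) * xhat k j, hle, ?_, ?_⟩
  · rw [Finset.sum_congr rfl (fun j _ => abs_of_nonneg (sub_nonneg.2 (hle j))),
      Finset.sum_sub_distrib, ← Finset.mul_sum, hs, hsh]
    linarith
  · intro j
    have hc : (0 : ℝ) < 1 + 10 * ε := by linarith
    rw [Finset.sum_congr rfl (fun j _ => abs_of_nonneg (mul_nonneg hc.le (hnn j))),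
      ← Finset.mul_sum, hsh, mul_one]
    exact (mul_div_cancel_left₀ _ hc.ne').symm
end

section
/- Let γ ∈ ℝᵐ. (a) For all y, y' ∈ Δᵐ with y entrywise positive, ⟨γ, y − y'⟩ − V_y(y') ≤ (1/2)·‖γ‖_∞², where V_y(y') = Σ_i y'_i log(y'_i/y_i) with the convention 0·log 0 = 0. (b) For every z ∈ Δᵐ, |⟨γ − clip(γ), z⟩| ≤ Σ_{i=1}^m z_i·γ_i², and moreover Σ_i z_i·(clip(γ)_i)² ≤ Σ_i z_i·γ_i², where clip(γ)_i = sign(γ_i)·min(|γ_i|, 1). -/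
/-- Clipping to `[-1, 1]`: `clip(v) = sign(v) · min(|v|, 1)`. -/
noncomputable def clipR (v : ℝ) : ℝ := Real.sign v * min |v| 1

lemma clipR_bounds (v : ℝ) : |v - clipR v| ≤ v ^ 2 ∧ clipR v ^ 2 ≤ v ^ 2 := by
  unfold clipR
  rcases lt_trichotomy v 0 with h | h | h
  · rw [Real.sign_of_neg h, abs_of_neg h]
    rcases le_total (-v) 1 with h1 | h1
    · rw [min_eq_left h1]
      constructor
      · rw [show v - -1 * -v = 0 by ring, abs_zero]; positivity
      · nlinarith
    · rw [min_eq_right h1]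
      constructor
      · rw [abs_le]; constructor <;> nlinarith
      · nlinarith
  · subst h; simp
  · rw [Real.sign_of_pos h, abs_of_pos h]
    rcases le_total v 1 with h1 | h1
    · rw [min_eq_left h1]
      constructor
      · rw [show v - 1 * v = 0 by ring, abs_zero]; positivity
      · nlinarith
    · rw [min_eq_right h1]
      constructor
      · rw [abs_le]; constructor <;> nlinarith
      · nlinarith

lemma hoeffding_simplex (m : ℕ) (γ y : Fin m → ℝ) (hy : y ∈ stdSimplex ℝ (Fin m)) :
    ∑ i, y i * Real.exp ((∑ j, y j * γ j) - γ i) ≤ Real.exp (‖γ‖ ^ 2 / 2) := by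
  obtain ⟨h0, h1⟩ := hy
  let p : PMF (Fin m) := PMF.ofFintype (fun i => ENNReal.ofReal (y i)) (by
    rw [← ENNReal.ofReal_sum_of_nonneg (fun i _ => h0 i), h1, ENNReal.ofReal_one])
  have hint : ∀ f : Fin m → ℝ, ∫ i, f i ∂p.toMeasure = ∑ i, y i * f i := by
    intro f
    rw [PMF.integral_eq_sum]
    refine Finset.sum_congr rfl fun i _ => ?_
    simp [p, ENNReal.toReal_ofReal (h0 i)]
  have H := ProbabilityTheory.hasSubgaussianMGF_of_mem_Icc (μ := p.toMeasure)
    (X := fun i => - γ i) (a := -‖γ‖) (b := ‖γ‖) (measurable_of_finite _).aemeasurable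
    (Filter.Eventually.of_forall fun i => by
      have := norm_le_pi_norm γ i
      rw [Real.norm_eq_abs, abs_le] at this
      constructor <;> linarith)
  have H1 := H.mgf_le 1
  unfold ProbabilityTheory.mgf at H1
  rw [hint, hint] at H1
  convert H1 using 1
  · refine Finset.sum_congr rfl fun i _ => ?_
    congr 2
    simp
    ring
  · congr 1
    simp
    ring_nf
    simp
    ring

lemma gibbs_pointwise (y y' a c : ℝ) (hy : 0 < y) (hy' : 0 ≤ y') :
    y' * a - y' * Real.log (y' / y) ≤ y * Real.exp a * Real.exp (-c) + y' * (c - 1) := by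
  rcases hy'.eq_or_lt with h | h
  · subst h; simp; positivity
  · have h1 := Real.add_one_le_exp (a - Real.log (y' / y) - c)
    have h2 : y' * Real.exp (a - Real.log (y' / y) - c) = y * Real.exp a * Real.exp (-c) := by
      rw [sub_eq_add_neg, Real.exp_add, Real.exp_sub, Real.exp_log (by positivity)]
      field_simp
    rw [← h2]
    nlinarith [mul_le_mul_of_nonneg_left h1 h.le]

/-- (a) Entropy on the simplex satisfies
`⟨γ, y − y'⟩ − V_y(y') ≤ (1/2)‖γ‖_∞²`; (b) the clipping distortion bounds
`|⟨γ − clip(γ), z⟩| ≤ ∑ᵢ zᵢ γᵢ²` and `∑ᵢ zᵢ (clip γᵢ)² ≤ ∑ᵢ zᵢ γᵢ²` hold for `z ∈ Δᵐ`. -/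
theorem entropy_strong_convexity_and_clipping (m : ℕ) (γ : Fin m → ℝ) :
    (∀ y y' : Fin m → ℝ, y ∈ stdSimplex ℝ (Fin m) → y' ∈ stdSimplex ℝ (Fin m) →
      (∀ i, 0 < y i) →
      (∑ i, γ i * (y i - y' i)) - (∑ i, y' i * Real.log (y' i / y i))
        ≤ (1 / 2) * ‖γ‖ ^ 2) ∧
    (∀ z : Fin m → ℝ, z ∈ stdSimplex ℝ (Fin m) →
      |∑ i, (γ i - clipR (γ i)) * z i| ≤ (∑ i, z i * γ i ^ 2) ∧
      (∑ i, z i * clipR (γ i) ^ 2) ≤ ∑ i, z i * γ i ^ 2) := by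
  refine ⟨fun y y' hy hy' hpos => ?_, fun z hz => ⟨?_, ?_⟩⟩
  · have H := hoeffding_simplex m γ y hy
    set g := ∑ j, y j * γ j with hg
    have h1 : ∑ i, (y' i * (g - γ i) - y' i * Real.log (y' i / y i)) ≤
        ∑ i, (y i * Real.exp (g - γ i) * Real.exp (-(‖γ‖ ^ 2 / 2))
          + y' i * (‖γ‖ ^ 2 / 2 - 1)) :=
      Finset.sum_le_sum fun i _ => gibbs_pointwise _ _ _ _ (hpos i) (hy'.1 i)
    rw [Finset.sum_add_distrib, ← Finset.sum_mul, ← Finset.sum_mul, hy'.2,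
      Finset.sum_sub_distrib] at h1
    have h2 := mul_le_mul_of_nonneg_right H (Real.exp_pos (-(‖γ‖ ^ 2 / 2))).le
    rw [← Real.exp_add, add_neg_cancel, Real.exp_zero] at h2
    have h3 : ∑ i, γ i * (y i - y' i) = ∑ i, y' i * (g - γ i) := by
      simp only [mul_sub, Finset.sum_sub_distrib]
      rw [← Finset.sum_mul, hy'.2, one_mul, hg]
      simp only [mul_comm]
    rw [h3]
    linarith
  · refine (Finset.abs_sum_le_sum_abs _ _).trans (Finset.sum_le_sum fun i _ => ?_)
    rw [abs_mul, abs_of_nonneg (hz.1 i), mul_comm]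
    exact mul_le_mul_of_nonneg_left (clipR_bounds _).1 (hz.1 i)
  · exact Finset.sum_le_sum fun i _ =>
      mul_le_mul_of_nonneg_left (clipR_bounds _).2 (hz.1 i)
end

section
/- Let A ∈ ℝ^{m×n} have every row and every column nonzero. For y ∈ Δᵐ and x ∈ Δⁿ define p_{ij} = y_i · A_{ij}² / ‖A_{i:}‖₂² and q_{ij} = x_j · A_{ij}² / ‖A_{:j}‖₂². Then for every w ∈ Δⁿ and v ∈ Δᵐ: Σ_{(i,j) : p_{ij} > 0} p_{ij} · w_j · ( A_{ij}·y_i / p_{ij} )² ≤ max_{i∈[m]} ‖A_{i:}‖₂², and Σ_{(i,j) : q_{ij} > 0} q_{ij} · v_i · ( A_{ij}·x_j / q_{ij} )² ≤ max_{j∈[n]} ‖A_{:j}‖₂². (These are the local-norm second moments of the x- and y-blocks of the ℓ₁-ℓ₁ coordinate gradient estimator, establishing that it is a √2·L_co-local estimator with L_co = max{max_i ‖A_{i:}‖₂, max_j ‖A_{:j}‖₂}.) -/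
lemma term_bound (a y w S M p : ℝ) (hy : 0 ≤ y) (hw : 0 ≤ w) (hS : 0 ≤ S) (hSM : S ≤ M)
    (hp : p = y * a ^ 2 / S) :
    (if 0 < p then p * (w * (a * y / p) ^ 2) else 0) ≤ y * w * M := by
  have hM : y * w * S ≤ y * w * M := mul_le_mul_of_nonneg_left hSM (mul_nonneg hy hw)
  split_ifs with h
  · have hS0 : S ≠ 0 := by rintro rfl; simp [hp] at h
    have hy0 : y ≠ 0 := by rintro rfl; simp [hp] at h
    have ha0 : a ≠ 0 := by rintro rfl; simp [hp] at h
    refine le_trans (le_of_eq ?_) hM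
    rw [hp]
    field_simp
  · exact le_trans (mul_nonneg (mul_nonneg hy hw) hS) hM

lemma double_sum {m n : ℕ} (y : Fin m → ℝ) (w : Fin n → ℝ) (hy : ∑ i, y i = 1)
    (hw : ∑ j, w j = 1) (M : ℝ) : ∑ i, ∑ j, y i * w j * M = M := by
  simp_rw [← Finset.sum_mul, ← Finset.mul_sum, hw, mul_one, hy, one_mul]

/-- Local-norm second moment bounds for the ℓ₁-ℓ₁ coordinate gradient
estimator with sampling distributions `p_{ij} = yᵢ A_{ij}²/‖A_{i:}‖₂²` and
`q_{ij} = xⱼ A_{ij}²/‖A_{:j}‖₂²`. -/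
theorem l1l1_coordinate_estimator_local_moment
    (m n : ℕ) (hm : 0 < m) (hn : 0 < n)
    (A : Matrix (Fin m) (Fin n) ℝ)
    (hrow : ∀ i, A i ≠ 0) (hcol : ∀ j, A.transpose j ≠ 0)
    (y : Fin m → ℝ) (hy : y ∈ stdSimplex ℝ (Fin m))
    (x : Fin n → ℝ) (hx : x ∈ stdSimplex ℝ (Fin n))
    (p q : Fin m → Fin n → ℝ)
    (hp : ∀ i j, p i j = y i * (A i j) ^ 2 / ∑ l, (A i l) ^ 2)
    (hq : ∀ i j, q i j = x j * (A i j) ^ 2 / ∑ k, (A k j) ^ 2) :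
    (∀ w ∈ stdSimplex ℝ (Fin n),
      (∑ i, ∑ j, if 0 < p i j then p i j * (w j * (A i j * y i / p i j) ^ 2) else 0)
        ≤ Finset.univ.sup' ⟨⟨0, hm⟩, Finset.mem_univ _⟩ (fun i => ∑ l, (A i l) ^ 2)) ∧
    (∀ v ∈ stdSimplex ℝ (Fin m),
      (∑ i, ∑ j, if 0 < q i j then q i j * (v i * (A i j * x j / q i j) ^ 2) else 0)
        ≤ Finset.univ.sup' ⟨⟨0, hn⟩, Finset.mem_univ _⟩ (fun j => ∑ k, (A k j) ^ 2)) := by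
  constructor
  · intro w hw
    refine le_trans (Finset.sum_le_sum fun i _ => Finset.sum_le_sum fun j _ =>
      term_bound (A i j) (y i) (w j) _ _ (p i j) (hy.1 i) (hw.1 j)
        (Finset.sum_nonneg fun l _ => sq_nonneg (A i l))
        (Finset.le_sup' (fun i => ∑ l, (A i l) ^ 2) (Finset.mem_univ i)) (hp i j)) ?_
    exact le_of_eq (double_sum y w hy.2 hw.2 (Finset.univ.sup' _ _))
  · intro v hv
    refine le_trans (Finset.sum_le_sum fun i _ => Finset.sum_le_sum fun j _ =>
      term_bound (A i j) (x j) (v i) _ _ (q i j) (hx.1 j) (hv.1 i)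
        (Finset.sum_nonneg fun k _ => sq_nonneg (A k j))
        (Finset.le_sup' (fun j => ∑ k, (A k j) ^ 2) (Finset.mem_univ j)) (hq i j)) ?_
    rw [Finset.sum_comm]
    exact le_of_eq (double_sum x v hx.2 hv.2 (Finset.univ.sup' _ _))
end

section
/- Let A ∈ ℝ^{m×n} be nonzero with every row nonzero, and define the oblivious distribution p_{ij} = ( ‖A_{i:}‖₁² / Σ_{k=1}^m ‖A_{k:}‖₁² ) · ( |A_{ij}| / ‖A_{i:}‖₁ ). Then for every y ∈ ℝᵐ with ‖y‖₂ ≤ 1: Σ_{(i,j) : A_{ij} ≠ 0} A_{ij}² · y_i² / p_{ij} ≤ Σ_{i=1}^m ‖A_{i:}‖₁². Symmetrically, if every column is nonzero and q_{ij} = ( ‖A_{:j}‖₁² / Σ_{k=1}^n ‖A_{:k}‖₁² ) · ( |A_{ij}| / ‖A_{:j}‖₁ ), then for every x ∈ ℝⁿ with ‖x‖₂ ≤ 1: Σ_{(i,j) : A_{ij} ≠ 0} A_{ij}² · x_j² / q_{ij} ≤ Σ_{j=1}^n ‖A_{:j}‖₁². -/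
theorem aux_moment {a b : ℕ} (B : Fin a → Fin b → ℝ) (y : Fin a → ℝ)
    (hy : (∑ i, (y i) ^ 2) ≤ 1) :
    (∑ i, ∑ j, if B i j ≠ 0 then (B i j) ^ 2 * (y i) ^ 2 /
      ((∑ l, |B i l|) ^ 2 / (∑ k, (∑ l, |B k l|) ^ 2) * (|B i j| / ∑ l, |B i l|)) else 0)
        ≤ ∑ i, (∑ l, |B i l|) ^ 2 := by
  set S := ∑ k, (∑ l, |B k l|) ^ 2 with hS
  have hS0 : 0 ≤ S := by positivity
  have h1 : ∀ i, (∑ j, if B i j ≠ 0 then (B i j) ^ 2 * (y i) ^ 2 /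
      ((∑ l, |B i l|) ^ 2 / S * (|B i j| / ∑ l, |B i l|)) else 0) ≤ y i ^ 2 * S := by
    intro i
    have h2 : ∀ j, (if B i j ≠ 0 then (B i j) ^ 2 * (y i) ^ 2 /
      ((∑ l, |B i l|) ^ 2 / S * (|B i j| / ∑ l, |B i l|)) else 0)
        = y i ^ 2 * S * (|B i j| / ∑ l, |B i l|) := by
      intro j
      split_ifs with h
      · have hb : 0 < |B i j| := abs_pos.mpr h
        have hr : 0 < ∑ l, |B i l| := lt_of_lt_of_le hb
          (Finset.single_le_sum (f := fun l => |B i l|) (fun l _ => abs_nonneg _)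
            (Finset.mem_univ j))
        have hSp : 0 < S := lt_of_lt_of_le (pow_pos hr 2)
          (Finset.single_le_sum (f := fun k => (∑ l, |B k l|) ^ 2) (fun l _ => sq_nonneg _)
            (Finset.mem_univ i))
        rw [← sq_abs (B i j)]
        generalize (∑ l, |B i l|) = r at *
        field_simp
      · have : B i j = 0 := not_not.mp h
        simp [this]
    rw [Finset.sum_congr rfl (fun j _ => h2 j), ← Finset.mul_sum, ← Finset.sum_div]
    exact mul_le_of_le_one_right (by positivity) (div_self_le_one _)
  calc _ ≤ ∑ i, y i ^ 2 * S := Finset.sum_le_sum (fun i _ => h1 i)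
    _ = (∑ i, y i ^ 2) * S := by rw [Finset.sum_mul]
    _ ≤ S := mul_le_of_le_one_left hS0 hy

/-- Euclidean second moment bounds for the oblivious ℓ₂-ℓ₂ coordinate
gradient estimator: with `p_{ij} = (‖A_{i:}‖₁²/∑ₖ‖A_{k:}‖₁²)·(|A_{ij}|/‖A_{i:}‖₁)` one has
`∑_{A_{ij}≠0} A_{ij}² yᵢ²/p_{ij} ≤ ∑ᵢ ‖A_{i:}‖₁²` for all `‖y‖₂ ≤ 1`, and symmetrically
for columns. -/
theorem l2l2_oblivious_estimator_moment
    (m n : ℕ) (A : Matrix (Fin m) (Fin n) ℝ) (hA : A ≠ 0)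
    (p q : Fin m → Fin n → ℝ)
    (hp : ∀ i j, p i j =
      (∑ l, |A i l|) ^ 2 / (∑ k, (∑ l, |A k l|) ^ 2) * (|A i j| / ∑ l, |A i l|))
    (hq : ∀ i j, q i j =
      (∑ k, |A k j|) ^ 2 / (∑ l, (∑ k, |A k l|) ^ 2) * (|A i j| / ∑ k, |A k j|)) :
    ((∀ i, A i ≠ 0) → ∀ y : Fin m → ℝ, (∑ i, (y i) ^ 2) ≤ 1 →
      (∑ i, ∑ j, if A i j ≠ 0 then (A i j) ^ 2 * (y i) ^ 2 / p i j else 0)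
        ≤ ∑ i, (∑ l, |A i l|) ^ 2) ∧
    ((∀ j, A.transpose j ≠ 0) → ∀ x : Fin n → ℝ, (∑ j, (x j) ^ 2) ≤ 1 →
      (∑ i, ∑ j, if A i j ≠ 0 then (A i j) ^ 2 * (x j) ^ 2 / q i j else 0)
        ≤ ∑ j, (∑ k, |A k j|) ^ 2) := by
  constructor
  · intro _ y hy
    simp only [hp]
    exact aux_moment A y hy
  · intro _ x hx
    simp only [hq]
    rw [Finset.sum_comm]
    exact aux_moment (fun j i => A i j) x hx
end

section
/- Let A ∈ ℝ^{m×n} be a nonzero matrix with every row nonzero. For y ∈ Δᵐ define p_{ij} = y_i · |A_{ij}| / ‖A_{i:}‖₁, and define q_{ij} = A_{ij}² / ‖A‖_F². Then: (a) Σ_{(i,j) : p_{ij} > 0} A_{ij}² · y_i² / p_{ij} ≤ max_{i∈[m]} ‖A_{i:}‖₁²; and (b) for every x ∈ ℝⁿ with ‖x‖₂ ≤ 1 and every w ∈ Δᵐ, Σ_{(i,j) : A_{ij} ≠ 0} w_i · A_{ij}² · x_j² / q_{ij} ≤ ‖A‖_F². -/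
/-- Second moment bounds for the first ℓ₂-ℓ₁ coordinate gradient
estimator, with `p_{ij} = yᵢ|A_{ij}|/‖A_{i:}‖₁` and `q_{ij} = A_{ij}²/‖A‖_F²`:
(a) `∑_{p_{ij}>0} A_{ij}² yᵢ²/p_{ij} ≤ maxᵢ ‖A_{i:}‖₁²`;
(b) for `‖x‖₂ ≤ 1` and `w ∈ Δᵐ`, `∑_{A_{ij}≠0} wᵢ A_{ij}² xⱼ²/q_{ij} ≤ ‖A‖_F²`. -/
theorem l2l1_coordinate_estimator_moment
    (m n : ℕ) (hm : 0 < m)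
    (A : Matrix (Fin m) (Fin n) ℝ) (hA : A ≠ 0) (hrow : ∀ i, A i ≠ 0)
    (y : Fin m → ℝ) (hy : y ∈ stdSimplex ℝ (Fin m))
    (p q : Fin m → Fin n → ℝ)
    (hp : ∀ i j, p i j = y i * (|A i j| / ∑ l, |A i l|))
    (hq : ∀ i j, q i j = (A i j) ^ 2 / ∑ k, ∑ l, (A k l) ^ 2) :
    ((∑ i, ∑ j, if 0 < p i j then (A i j) ^ 2 * (y i) ^ 2 / p i j else 0)
        ≤ Finset.univ.sup' ⟨⟨0, hm⟩, Finset.mem_univ _⟩ (fun i => (∑ l, |A i l|) ^ 2)) ∧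
    (∀ x : Fin n → ℝ, (∑ j, (x j) ^ 2) ≤ 1 → ∀ w ∈ stdSimplex ℝ (Fin m),
      (∑ i, ∑ j, if A i j ≠ 0 then w i * (A i j) ^ 2 * (x j) ^ 2 / q i j else 0)
        ≤ ∑ k, ∑ l, (A k l) ^ 2) := by
  obtain ⟨hy0, hy1⟩ := hy
  constructor
  · set M := Finset.univ.sup' ⟨⟨0, hm⟩, Finset.mem_univ _⟩
      (fun i => (∑ l, |A i l|) ^ 2) with hM
    have key : ∀ i, (∑ j, if 0 < p i j then (A i j) ^ 2 * (y i) ^ 2 / p i j else 0)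
        ≤ y i * M := by
      intro i
      have hS0 : 0 ≤ ∑ l, |A i l| := Finset.sum_nonneg fun l _ => abs_nonneg _
      have hSM : (∑ l, |A i l|) ^ 2 ≤ M :=
        Finset.le_sup' (fun i => (∑ l, |A i l|) ^ 2) (Finset.mem_univ i)
      calc (∑ j, if 0 < p i j then (A i j) ^ 2 * (y i) ^ 2 / p i j else 0)
          ≤ ∑ j, (y i * ∑ l, |A i l|) * |A i j| := by
            apply Finset.sum_le_sum
            intro j _
            split_ifs with h
            · rw [hp] at h ⊢
              have h1 : y i ≠ 0 := by
                intro h0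
                simp [h0] at h
              have h2 : |A i j| ≠ 0 := by
                intro h0
                simp [h0] at h
              have h3 : (∑ l, |A i l|) ≠ 0 := by
                intro h0
                simp [h0] at h
              rw [← sq_abs (A i j)]
              generalize (∑ l, |A i l|) = S at *
              apply le_of_eq
              field_simp
            · exact mul_nonneg (mul_nonneg (hy0 i) hS0) (abs_nonneg _)
        _ = y i * (∑ l, |A i l|) ^ 2 := by rw [← Finset.mul_sum]; ring
        _ ≤ y i * M := mul_le_mul_of_nonneg_left hSM (hy0 i)
    calc _ ≤ ∑ i, y i * M := Finset.sum_le_sum fun i _ => key i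
      _ = M := by rw [← Finset.sum_mul, hy1, one_mul]
  · rintro x hx w ⟨hw0, hw1⟩
    have hF0 : 0 ≤ ∑ k, ∑ l, (A k l) ^ 2 :=
      Finset.sum_nonneg fun k _ => Finset.sum_nonneg fun l _ => sq_nonneg _
    simp only [hq]
    generalize (∑ k, ∑ l, (A k l) ^ 2) = F at *
    calc _ ≤ ∑ i, ∑ j, w i * ((x j) ^ 2 * F) := by
          apply Finset.sum_le_sum
          intro i _
          apply Finset.sum_le_sum
          intro j _
          split_ifs with h
          · apply le_of_eq
            rw [div_div_eq_mul_div]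
            field_simp
          · exact mul_nonneg (hw0 i) (mul_nonneg (sq_nonneg _) hF0)
      _ = (∑ j, (x j) ^ 2) * F := by
          simp only [← Finset.mul_sum, ← Finset.sum_mul]
          rw [hw1, one_mul]
      _ ≤ F := mul_le_of_le_one_left hF0 hx
end

section
/- Let A ∈ ℝ^{m×n} have every row nonzero, let y, y₀ ∈ ℝᵐ, and define the oblivious distribution p_{ij} = ( ‖A_{i:}‖₁² / Σ_{k=1}^m ‖A_{k:}‖₁² ) · ( |A_{ij}| / ‖A_{i:}‖₁ ). Then Σ_{(i,j) : A_{ij} ≠ 0} A_{ij}² · ( y_i − (y₀)_i )² / p_{ij} = ( Σ_{i=1}^m ‖A_{i:}‖₁² ) · ‖y − y₀‖₂². -/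
/-- Exact second moment identity for the oblivious variance-reduced
ℓ₂-ℓ₂ coordinate estimator: with
`p_{ij} = (‖A_{i:}‖₁²/∑ₖ‖A_{k:}‖₁²)·(|A_{ij}|/‖A_{i:}‖₁)`,
`∑_{A_{ij}≠0} A_{ij}² (yᵢ − (y₀)ᵢ)²/p_{ij} = (∑ᵢ ‖A_{i:}‖₁²)·‖y − y₀‖₂²`. -/
theorem l2l2_vr_estimator_moment_eq
    (m n : ℕ) (A : Matrix (Fin m) (Fin n) ℝ) (hrow : ∀ i, A i ≠ 0)
    (y y₀ : Fin m → ℝ)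
    (p : Fin m → Fin n → ℝ)
    (hp : ∀ i j, p i j =
      (∑ l, |A i l|) ^ 2 / (∑ k, (∑ l, |A k l|) ^ 2) * (|A i j| / ∑ l, |A i l|)) :
    (∑ i, ∑ j, if A i j ≠ 0 then (A i j) ^ 2 * (y i - y₀ i) ^ 2 / p i j else 0)
      = (∑ i, (∑ l, |A i l|) ^ 2) * ∑ i, (y i - y₀ i) ^ 2 := by
  have hr : ∀ i, 0 < ∑ l, |A i l| := by
    intro i
    obtain ⟨j, hj⟩ := Function.ne_iff.mp (hrow i)
    exact Finset.sum_pos' (fun _ _ => abs_nonneg _) ⟨j, Finset.mem_univ _, abs_pos.mpr hj⟩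
  rw [Finset.mul_sum]
  refine Finset.sum_congr rfl fun i _ => ?_
  have hS : 0 < ∑ k, (∑ l, |A k l|) ^ 2 :=
    Finset.sum_pos (fun k _ => pow_pos (hr k) 2) ⟨i, Finset.mem_univ _⟩
  have hi := hr i
  have key : ∀ j, (if A i j ≠ 0 then (A i j) ^ 2 * (y i - y₀ i) ^ 2 / p i j else 0)
      = |A i j| * ((∑ k, (∑ l, |A k l|) ^ 2) * (y i - y₀ i) ^ 2 / ∑ l, |A i l|) := by
    intro j
    rw [hp]
    generalize (∑ k, (∑ l, |A k l|) ^ 2) = S at *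
    generalize (∑ l, |A i l|) = r at *
    split_ifs with h
    · have ha := abs_pos.mpr h
      rw [← sq_abs (A i j)]
      field_simp
    · simp [not_not.mp h]
  rw [Finset.sum_congr rfl fun j _ => key j, ← Finset.sum_mul]
  field_simp
end

section
/- Let n ≥ 1, λ ∈ (0,1], ε' ∈ (0, 1/10], and let b ∈ ℝⁿ satisfy λ ≤ b_i ≤ 1 for all i; let g ∈ ℝⁿ, σ̂ > 0, and σ ∈ [σ̂/2, σ̂]. Let R ≥ 4·log(2n/(λ·ε')) and let μ ∈ ℝ satisfy max_i g_i ≤ μ ≤ max_i g_i + R/(2σ̂). Let p ∈ ℕ be such that the degree-p Taylor polynomial f_p(t) = Σ_{q=0}^p t^q/q! satisfies |e^t − f_p(t)| ≤ ε'·e^t for every t ∈ [−R, 0]. Define δ̃_i := max( g_i − μ, −R/σ̂ ) for each i, and Z := e^{σμ} · Σ_{q=0}^p (σ^q/q!) · Σ_{i=1}^n b_i · (δ̃_i)^q. Then (1 − ε') · Σ_{i=1}^n b_i·e^{σ·g_i} ≤ Z ≤ (1 + 2ε') · Σ_{i=1}^n b_i·e^{σ·g_i}. -/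
/-- Correctness of the truncated-shifted Taylor approximation of the
normalization factor in the `ScaleMaintainer` data structure: with
`δ̃ᵢ = max(gᵢ − μ, −R/σ̂)` and `Z = e^{σμ} ∑_{q=0}^p (σ^q/q!) ∑ᵢ bᵢ δ̃ᵢ^q`, one has
`(1 − ε')·∑ᵢ bᵢ e^{σgᵢ} ≤ Z ≤ (1 + 2ε')·∑ᵢ bᵢ e^{σgᵢ}`. -/
theorem scale_maintainer_taylor_correct
    (n : ℕ) (hn : 0 < n) (lam ε' : ℝ)
    (hlam0 : 0 < lam) (hlam1 : lam ≤ 1) (hε'0 : 0 < ε') (hε' : ε' ≤ 1 / 10)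
    (b : Fin n → ℝ) (hb : ∀ i, lam ≤ b i ∧ b i ≤ 1)
    (g : Fin n → ℝ) (σhat σ : ℝ) (hσhat : 0 < σhat)
    (hσlo : σhat / 2 ≤ σ) (hσhi : σ ≤ σhat)
    (R : ℝ) (hR : 4 * Real.log (2 * n / (lam * ε')) ≤ R)
    (μ : ℝ)
    (hμlo : Finset.univ.sup' ⟨⟨0, hn⟩, Finset.mem_univ _⟩ g ≤ μ)
    (hμhi : μ ≤ Finset.univ.sup' ⟨⟨0, hn⟩, Finset.mem_univ _⟩ g + R / (2 * σhat))
    (p : ℕ)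
    (htaylor : ∀ t ∈ Set.Icc (-R) (0 : ℝ),
      |Real.exp t - ∑ q ∈ Finset.range (p + 1), t ^ q / (Nat.factorial q : ℝ)|
        ≤ ε' * Real.exp t)
    (δt : Fin n → ℝ) (hδt : ∀ i, δt i = max (g i - μ) (-(R / σhat)))
    (Z : ℝ)
    (hZ : Z = Real.exp (σ * μ) *
      ∑ q ∈ Finset.range (p + 1), σ ^ q / (Nat.factorial q : ℝ) * ∑ i, b i * δt i ^ q) :
    (1 - ε') * (∑ i, b i * Real.exp (σ * g i)) ≤ Z ∧
      Z ≤ (1 + 2 * ε') * ∑ i, b i * Real.exp (σ * g i) := by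
  have hn1 : (1 : ℝ) ≤ n := by exact_mod_cast hn
  have hn0 : (0 : ℝ) < n := by linarith
  have hle : 0 < lam * ε' := mul_pos hlam0 hε'0
  have hle1 : lam * ε' ≤ 1 := by nlinarith
  have hσ : 0 < σ := by linarith
  have hX : 1 ≤ 2 * n / (lam * ε') := by
    rw [le_div_iff₀ hle]; linarith
  have hR0 : 0 ≤ R := by
    have := Real.log_nonneg hX
    linarith
  have hexpR : Real.exp (-(R / 4)) ≤ lam * ε' / (2 * n) := by
    have h1 : -(R / 4) ≤ -Real.log (2 * n / (lam * ε')) := by linarith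
    calc Real.exp (-(R / 4)) ≤ Real.exp (-Real.log (2 * n / (lam * ε'))) := Real.exp_le_exp.2 h1
      _ = lam * ε' / (2 * n) := by
        rw [Real.exp_neg, Real.exp_log (by linarith), inv_div]
  obtain ⟨k, -, hk⟩ := Finset.exists_mem_eq_sup' (s := (Finset.univ : Finset (Fin n)))
    ⟨⟨0, hn⟩, Finset.mem_univ _⟩ g
  have hgle : ∀ i, g i ≤ μ := fun i =>
    (Finset.le_sup' g (Finset.mem_univ i)).trans hμlo
  rw [hk] at hμhi
  have hb0 : ∀ i, 0 < b i := fun i => lt_of_lt_of_le hlam0 (hb i).1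
  have hZ' : Z = ∑ i, b i * (Real.exp (σ * μ) *
      ∑ q ∈ Finset.range (p + 1), (σ * δt i) ^ q / (Nat.factorial q : ℝ)) := by
    rw [hZ]
    simp only [Finset.mul_sum]
    rw [Finset.sum_comm]
    refine Finset.sum_congr rfl fun i _ => Finset.sum_congr rfl fun q _ => ?_
    rw [mul_pow]; ring
  have hρ1 : σ * (R / σhat) ≤ R := by
    rw [← mul_div_assoc, div_le_iff₀ hσhat]; nlinarith
  have hρ2 : R / 2 ≤ σ * (R / σhat) := by
    rw [← mul_div_assoc, le_div_iff₀ hσhat]; nlinarith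
  have hρ0 : 0 ≤ R / σhat := by positivity
  have hmem : ∀ i, σ * δt i ∈ Set.Icc (-R) (0 : ℝ) := by
    intro i
    have h1 : -(R / σhat) ≤ δt i := by rw [hδt]; exact le_max_right _ _
    have h2 : δt i ≤ 0 := by
      rw [hδt]; exact max_le (by linarith [hgle i]) (by linarith)
    exact ⟨by nlinarith, by nlinarith⟩
  have hT := fun i => abs_le.1 (htaylor _ (hmem i))
  have hE : ∀ i, Real.exp (σ * g i) ≤ Real.exp (σ * μ) * Real.exp (σ * δt i) := by
    intro i
    rw [← Real.exp_add, Real.exp_le_exp]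
    have h1 : g i - μ ≤ δt i := by rw [hδt]; exact le_max_left _ _
    nlinarith
  have hc : Real.exp (σ * μ + σ * (-(R / σhat))) ≤
      Real.exp (σ * g k) * (lam * ε' / (2 * n)) := by
    refine le_trans ?_ (mul_le_mul_of_nonneg_left hexpR (Real.exp_pos _).le)
    rw [← Real.exp_add, Real.exp_le_exp]
    have h1 : R / (2 * σhat) = (R / σhat) / 2 := by field_simp
    rw [h1] at hμhi
    have := mul_le_mul_of_nonneg_left hμhi hσ.le
    linarith
  have hE2 : ∀ i, Real.exp (σ * μ) * Real.exp (σ * δt i) ≤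
      Real.exp (σ * g i) + Real.exp (σ * g k) * (lam * ε' / (2 * n)) := by
    intro i
    rw [← Real.exp_add, hδt]
    rcases max_choice (g i - μ) (-(R / σhat)) with h | h <;> rw [h]
    · have : σ * μ + σ * (g i - μ) = σ * g i := by ring
      rw [this]
      have : 0 ≤ Real.exp (σ * g k) * (lam * ε' / (2 * n)) := by positivity
      linarith
    · linarith [Real.exp_pos (σ * g i)]
  constructor
  · rw [hZ', Finset.mul_sum]
    refine Finset.sum_le_sum fun i _ => ?_
    rw [mul_left_comm]
    refine mul_le_mul_of_nonneg_left ?_ (hb0 i).le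
    calc (1 - ε') * Real.exp (σ * g i)
        ≤ (1 - ε') * (Real.exp (σ * μ) * Real.exp (σ * δt i)) :=
          mul_le_mul_of_nonneg_left (hE i) (by linarith)
      _ = Real.exp (σ * μ) * ((1 - ε') * Real.exp (σ * δt i)) := by ring
      _ ≤ _ := mul_le_mul_of_nonneg_left (by linarith [(hT i).2]) (Real.exp_pos _).le
  · have hS : lam * Real.exp (σ * g k) ≤ ∑ i, b i * Real.exp (σ * g i) :=
      (mul_le_mul_of_nonneg_right (hb k).1 (Real.exp_pos _).le).trans
        (Finset.single_le_sum (f := fun i => b i * Real.exp (σ * g i))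
          (fun i _ => (mul_pos (hb0 i) (Real.exp_pos _)).le) (Finset.mem_univ k))
    have hterm : Z ≤ ∑ i, ((1 + ε') * (b i * Real.exp (σ * g i)) +
        (1 + ε') * (Real.exp (σ * g k) * (lam * ε' / (2 * n)))) := by
      rw [hZ']
      refine Finset.sum_le_sum fun i _ => ?_
      have hC : 0 ≤ Real.exp (σ * g k) * (lam * ε' / (2 * n)) := by positivity
      calc _ ≤ b i * (Real.exp (σ * μ) * ((1 + ε') * Real.exp (σ * δt i))) :=
            mul_le_mul_of_nonneg_left
              (mul_le_mul_of_nonneg_left (by linarith [(hT i).1]) (Real.exp_pos _).le) (hb0 i).le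
        _ = (1 + ε') * (b i * (Real.exp (σ * μ) * Real.exp (σ * δt i))) := by ring
        _ ≤ (1 + ε') * (b i * (Real.exp (σ * g i) +
              Real.exp (σ * g k) * (lam * ε' / (2 * n)))) :=
            mul_le_mul_of_nonneg_left
              (mul_le_mul_of_nonneg_left (hE2 i) (hb0 i).le) (by linarith)
        _ ≤ _ := by
          rw [← mul_add]
          refine mul_le_mul_of_nonneg_left ?_ (by linarith)
          have := mul_le_mul_of_nonneg_right (hb i).2 hC
          linarith
    rw [Finset.sum_add_distrib, ← Finset.mul_sum, Finset.sum_const, Finset.card_univ,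
      Fintype.card_fin, nsmul_eq_mul] at hterm
    have h2 : (n : ℝ) * ((1 + ε') * (Real.exp (σ * g k) * (lam * ε' / (2 * n)))) =
        (1 + ε') * (ε' / 2) * (lam * Real.exp (σ * g k)) := by field_simp
    rw [h2] at hterm
    have h3 := mul_le_mul_of_nonneg_left hS (show 0 ≤ (1 + ε') * (ε' / 2) by positivity)
    have hS0 : 0 ≤ ∑ i, b i * Real.exp (σ * g i) := le_trans (by positivity) hS
    have h4 : (1 + ε') + (1 + ε') * (ε' / 2) ≤ 1 + 2 * ε' := by nlinarith
    have h5 := mul_le_mul_of_nonneg_right h4 hS0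
    linarith
end

section
/- Let A ∈ ℝ^{m×n}, b ∈ ℝᵐ, and let μ > 0 and β > 0 be such that ‖Av‖₂² ≥ μ·‖v‖₂² for every v ∈ ℝⁿ. Suppose x* ∈ ℝⁿ satisfies Aᵀ(Ax* − b) = 0, and suppose that for some x' ∈ ℝⁿ the point x*_{x'} ∈ ℝⁿ satisfies x*_{x'} = x' − (1/β²)·Aᵀ(A x*_{x'} − b). Then ‖x*_{x'} − x*‖₂ ≤ ( 1 / (1 + μ/β²) ) · ‖x' − x*‖₂. -/
/-- If `AᵀA ⪰ μI` (i.e. `‖Av‖₂² ≥ μ‖v‖₂²` for all `v`), `x*` satisfies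
the regression optimality condition `Aᵀ(Ax* − b) = 0`, and `x*_{x'}` satisfies the
regularized optimality condition `x*_{x'} = x' − (1/β²)Aᵀ(A x*_{x'} − b)`, then
`‖x*_{x'} − x*‖₂ ≤ (1/(1 + μ/β²))·‖x' − x*‖₂`. -/
theorem regression_contraction
    (m n : ℕ) (A : Matrix (Fin m) (Fin n) ℝ) (b : Fin m → ℝ)
    (μ β : ℝ) (hμ : 0 < μ) (hβ : 0 < β)
    (hA : ∀ v : Fin n → ℝ, μ * (∑ j, (v j) ^ 2) ≤ ∑ i, (A.mulVec v i) ^ 2)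
    (xstar : Fin n → ℝ) (hxstar : A.transpose.mulVec (A.mulVec xstar - b) = 0)
    (x' xs : Fin n → ℝ)
    (hxs : xs = x' - (1 / β ^ 2) • A.transpose.mulVec (A.mulVec xs - b)) :
    Real.sqrt (∑ j, (xs j - xstar j) ^ 2)
      ≤ (1 / (1 + μ / β ^ 2)) * Real.sqrt (∑ j, (x' j - xstar j) ^ 2) := by
  have h1 : A.transpose.mulVec (A.mulVec xs - b)
      = A.transpose.mulVec (A.mulVec (xs - xstar)) := by
    have : A.mulVec xs - b = A.mulVec (xs - xstar) + (A.mulVec xstar - b) := by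
      rw [Matrix.mulVec_sub]; abel
    rw [this, Matrix.mulVec_add, hxstar, add_zero]
  rw [h1] at hxs
  have h2 : x' - xstar = (xs - xstar)
      + (1 / β ^ 2) • A.transpose.mulVec (A.mulVec (xs - xstar)) := by
    have h3 : x' = xs + (1 / β ^ 2) • A.transpose.mulVec (A.mulVec (xs - xstar)) :=
      eq_add_of_sub_eq hxs.symm
    calc x' - xstar
        = (xs + (1 / β ^ 2) • A.transpose.mulVec (A.mulVec (xs - xstar))) - xstar := by
          rw [← h3]
      _ = _ := by abel
  have hD : ∑ j, (xs j - xstar j) ^ 2 = ∑ j, ((xs - xstar) j) ^ 2 := rfl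
  have hE : ∑ j, (x' j - xstar j) ^ 2 = ∑ j, ((x' - xstar) j) ^ 2 := rfl
  rw [hD, hE]
  generalize xs - xstar = d at h2 ⊢
  generalize x' - xstar = e at h2 ⊢
  have h4 : ∑ j, d j * e j = ∑ j, d j ^ 2 + (1 / β ^ 2) * ∑ i, (A.mulVec d i) ^ 2 := by
    have h5 : d ⬝ᵥ e = d ⬝ᵥ d + (1 / β ^ 2) * (A.mulVec d ⬝ᵥ A.mulVec d) := by
      rw [h2, dotProduct_add, dotProduct_smul, Matrix.dotProduct_mulVec d,
        Matrix.vecMul_transpose, smul_eq_mul]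
    simpa [dotProduct, pow_two] using h5
  have h6 := Real.sum_mul_le_sqrt_mul_sqrt Finset.univ d e
  have hc : 0 < 1 / β ^ 2 := by positivity
  have h7 := mul_le_mul_of_nonneg_left (hA d) hc.le
  have hK : 0 < 1 + μ / β ^ 2 := by positivity
  have hs : √(∑ j, d j ^ 2) ^ 2 = ∑ j, d j ^ 2 :=
    Real.sq_sqrt (Finset.sum_nonneg fun j _ => sq_nonneg _)
  have hn := Real.sqrt_nonneg (∑ j, d j ^ 2)
  have hn' := Real.sqrt_nonneg (∑ j, e j ^ 2)
  rw [one_div, ← div_eq_inv_mul, le_div_iff₀ hK]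
  have h8 : (1 + μ / β ^ 2) * √(∑ j, d j ^ 2) ^ 2
      ≤ √(∑ j, d j ^ 2) * √(∑ j, e j ^ 2) := by
    rw [hs]
    refine le_trans (le_of_eq_of_le ?_ (add_le_add_right h7 (∑ j, d j ^ 2))) (h4 ▸ h6)
    ring
  rcases hn.eq_or_lt with h0 | h0
  · rw [← h0]; simpa using hn'
  · refine le_of_mul_le_mul_left ?_ h0
    calc _ = (1 + μ / β ^ 2) * √(∑ j, d j ^ 2) ^ 2 := by ring
      _ ≤ _ := h8
end

section
/- Let m ≥ 2, n ≥ 1, ε > 0, A ∈ ℝ^{m×n}, and b ∈ ℝᵐ. Define f(x, y) = yᵀAx + yᵀb + (1/2)‖x‖₂² for x ∈ ℝⁿ and y ∈ Δᵐ, set ε' = ε/(32·log m), and define f_{ε'}(x, y) = f(x, y) − ε'·Σ_{i=1}^m y_i log y_i (with 0·log 0 = 0). Suppose (x', y') ∈ ℝⁿ × Δᵐ satisfies sup_{y ∈ Δᵐ} f_{ε'}(x', y) − inf_{x ∈ ℝⁿ} f_{ε'}(x, y') ≤ ε/16. Then sup_{y ∈ Δᵐ} f(x', y) − inf_{x ∈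 ℝⁿ} f(x, y') ≤ ε/8. -/
/-- For the Min-EB objective `f(x,y) = yᵀAx + yᵀb + ½‖x‖₂²` and its
entropy-regularized version `f_{ε'}` with `ε' = ε/(32 log m)`, an `(ε/16)`-accurate saddle
point of `f_{ε'}` is an `(ε/8)`-accurate saddle point of `f`. -/
theorem minEB_regularized_gap_transfer
    (m n : ℕ) (hm : 2 ≤ m) (ε : ℝ) (hε : 0 < ε)
    (A : Matrix (Fin m) (Fin n) ℝ) (b : Fin m → ℝ)
    (f fr : (Fin n → ℝ) → (Fin m → ℝ) → ℝ)
    (hf : ∀ x y, f x y =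
      (∑ i, y i * A.mulVec x i) + (∑ i, y i * b i) + (1 / 2) * ∑ j, (x j) ^ 2)
    (ε' : ℝ) (hε' : ε' = ε / (32 * Real.log m))
    (hfr : ∀ x y, fr x y = f x y - ε' * ∑ i, y i * Real.log (y i))
    (x' : Fin n → ℝ) (y' : Fin m → ℝ) (hy' : y' ∈ stdSimplex ℝ (Fin m))
    (hgap : (⨆ y : stdSimplex ℝ (Fin m), fr x' (y : Fin m → ℝ))
        - (⨅ x : Fin n → ℝ, fr x y') ≤ ε / 16) :
    (⨆ y : stdSimplex ℝ (Fin m), f x' (y : Fin m → ℝ))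
        - (⨅ x : Fin n → ℝ, f x y') ≤ ε / 8 := by
  have hmpos : (0:ℝ) < m := by positivity
  have hlog : 0 < Real.log m := Real.log_pos (by exact_mod_cast hm)
  have hepos : 0 < ε' := by rw [hε']; positivity
  have hemul : ε' * Real.log m = ε / 32 := by rw [hε']; field_simp
  have hneg : ∀ y ∈ stdSimplex ℝ (Fin m), ∑ i, y i * Real.log (y i) ≤ 0 := by
    intro y hy
    refine Finset.sum_nonpos fun i _ => Real.mul_log_nonpos (hy.1 i) ?_
    rw [← hy.2]
    exact Finset.single_le_sum (fun j _ => hy.1 j) (Finset.mem_univ i)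
  have hent : ∀ y ∈ stdSimplex ℝ (Fin m), -Real.log m ≤ ∑ i, y i * Real.log (y i) := by
    intro y hy
    have h1 : ∀ i, y i - 1 / m - y i * Real.log m ≤ y i * Real.log (y i) := by
      intro i
      rcases (hy.1 i).eq_or_lt with h | h
      · rw [← h]; simp
      · have h2 := Real.log_le_sub_one_of_pos (show 0 < 1 / (m * y i) by positivity)
        rw [one_div, Real.log_inv, Real.log_mul hmpos.ne' h.ne'] at h2
        have h3 := mul_le_mul_of_nonneg_left h2 h.le
        have h4 : y i * ((m * y i)⁻¹ - 1) = 1 / m - y i := by field_simp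
        rw [h4] at h3
        linarith
    have h2 := Finset.sum_le_sum fun i (_ : i ∈ Finset.univ) => h1 i
    rw [Finset.sum_sub_distrib, Finset.sum_sub_distrib, ← Finset.sum_mul, hy.2] at h2
    have h3 : ∑ _i : Fin m, 1 / (m : ℝ) = 1 := by simp [hmpos.ne']
    rw [h3] at h2
    linarith
  have hle : ∀ x, ∀ y ∈ stdSimplex ℝ (Fin m), f x y ≤ fr x y := by
    intro x y hy
    rw [hfr]
    nlinarith [hneg y hy]
  have hge : ∀ x, ∀ y ∈ stdSimplex ℝ (Fin m), fr x y ≤ f x y + ε / 32 := by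
    intro x y hy
    rw [hfr]
    nlinarith [hent y hy]
  have hbA : BddAbove (Set.range fun y : stdSimplex ℝ (Fin m) => fr x' (y : Fin m → ℝ)) := by
    have : CompactSpace (stdSimplex ℝ (Fin m)) :=
      isCompact_iff_compactSpace.mp (isCompact_stdSimplex ℝ (Fin m))
    refine (isCompact_range ?_).bddAbove
    simp only [hfr, hf]
    have hc : ∀ i, Continuous fun y : stdSimplex ℝ (Fin m) => (y : Fin m → ℝ) i :=
      fun i => (continuous_apply i).comp continuous_subtype_val
    have hl : ∀ i, Continuous fun y : stdSimplex ℝ (Fin m) =>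
        (y : Fin m → ℝ) i * Real.log ((y : Fin m → ℝ) i) :=
      fun i => Real.continuous_mul_log.comp (hc i)
    refine Continuous.sub (((continuous_finsetSum _ fun i _ => (hc i).mul continuous_const).add
      (continuous_finsetSum _ fun i _ => (hc i).mul continuous_const)).add continuous_const)
      (continuous_const.mul (continuous_finsetSum _ fun i _ => hl i))
  have hbB : BddBelow (Set.range fun x : Fin n → ℝ => fr x y') := by
    refine ⟨(∑ i, y' i * b i) - (1 / 2) * ∑ j, (∑ i, y' i * A i j) ^ 2, ?_⟩
    rintro _ ⟨x, rfl⟩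
    refine le_trans ?_ (hle x y' hy')
    rw [hf]
    have h1 : ∑ i, y' i * A.mulVec x i = ∑ j, (∑ i, y' i * A i j) * x j := by
      simp only [Matrix.mulVec, dotProduct, Finset.mul_sum, Finset.sum_mul]
      rw [Finset.sum_comm]
      simp only [mul_assoc]
    rw [h1]
    have h2 : 0 ≤ ∑ j, ((∑ i, y' i * A i j) + x j) ^ 2 :=
      Finset.sum_nonneg fun j _ => sq_nonneg _
    simp only [add_sq, Finset.sum_add_distrib, mul_assoc, ← Finset.mul_sum] at h2
    linarith
  have : Nonempty (stdSimplex ℝ (Fin m)) := ⟨⟨y', hy'⟩⟩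
  have hS : (⨆ y : stdSimplex ℝ (Fin m), f x' (y : Fin m → ℝ))
      ≤ ⨆ y : stdSimplex ℝ (Fin m), fr x' (y : Fin m → ℝ) :=
    ciSup_mono hbA fun y => hle x' y y.2
  have hI : (⨅ x : Fin n → ℝ, fr x y') - ε / 32 ≤ ⨅ x : Fin n → ℝ, f x y' := by
    refine le_ciInf fun x => ?_
    have := ciInf_le hbB x
    have := hge x y' hy'
    linarith
  linarith
end
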